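/- Let α : ℝ → ℝ² be a regular C³ plane curve on an open interval I with signed curvature K(t) ≠ 0, let f : I → ℝ be of class C², and define γ : I → ℝ³ by γ(t) = (α₁(t), α₂(t), f(t)). Then the principal unit normal vector N(t) = B(t) × T(t) of γ (with T = γ'/‖γ'‖ and B = (γ'×γ'')/‖γ'×γ''‖) satisfies N(t) = [ (ṡ² + f'²)·ι(α'') − ½ (d/dt)(ṡ² + f'²)·ι(α') + ( f''·ṡ² − f'·(d/dt)(ṡ²/2) )·e₃ ] / [ √(ṡ² + f'²) · √( ṡ⁶K² + ‖f''·α' − f'·α''‖² ) ], where ṡ(t) = ‖α'(t)‖, ι : ℝ² → ℝ³ is the embedding ι(p₁,p₂) = (p₁,p₂,0), and e₃ = (0,0,1). -/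

import Mathlib

/-!
Write `γ' = ι(α') + f'·e₃` and `γ'' = ι(α'') + f''·e₃`. Then `N` is the positive multiple
`(‖γ'‖ ‖γ' × γ''‖)⁻¹` of `(γ' × γ'') × γ' = ‖γ'‖²·γ'' - ⟪γ', γ''⟫·γ'`, where
`⟪γ', γ''⟫ = ½ (‖γ'‖²)'`. The denominator comes from the splitting
`γ' × γ'' = ι(J(f'α'' - f''α')) + ⟪α'', Jα'⟫·e₃`, whose two summands are orthogonal.
-/

open scoped RealInnerProductSpace

noncomputable section

/-- The Euclidean plane `ℝ²`. -/
abbrev E2 := EuclideanSpace ℝ (Fin 2)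
/-- Euclidean 3-space `ℝ³`. -/
abbrev E3 := EuclideanSpace ℝ (Fin 3)

/-- The point `(a, b)` of `ℝ²`. -/
def mk2 (a b : ℝ) : E2 := (WithLp.equiv 2 (Fin 2 → ℝ)).symm ![a, b]
/-- The point `(a, b, c)` of `ℝ³`. -/
def mk3 (a b c : ℝ) : E3 := (WithLp.equiv 2 (Fin 3 → ℝ)).symm ![a, b, c]

/-- The complex structure `J(p₁, p₂) = (-p₂, p₁)`, rotation by `π/2` counterclockwise. -/
def Jc (v : E2) : E2 := mk2 (-(v 1)) (v 0)
/-- The embedding `ι : ℝ² → ℝ³`, `ι(p₁, p₂) = (p₁, p₂, 0)`. -/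
def emb (v : E2) : E3 := mk3 (v 0) (v 1) 0
/-- The unit vector `e₃ = (0, 0, 1)`. -/
def e₃ : E3 := mk3 0 0 1
/-- The cross product in `ℝ³`. -/
def cross3 (u v : E3) : E3 :=
  mk3 (u 1 * v 2 - u 2 * v 1) (u 2 * v 0 - u 0 * v 2) (u 0 * v 1 - u 1 * v 0)

open scoped Topology

lemma mk3_eq_emb_add_smul_e₃ (v : E2) (z : ℝ) : mk3 (v 0) (v 1) z = emb v + z • e₃ := by
  ext i
  fin_cases i <;> simp [mk3, emb, e₃]

/-- `emb` as a continuous linear map, through which it commutes with differentiation. -/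
def embCLM : E2 →L[ℝ] E3 :=
  LinearMap.toContinuousLinearMap
    { toFun := emb
      map_add' := fun v w => by ext i; fin_cases i <;> simp [emb, mk3]
      map_smul' := fun c v => by ext i; fin_cases i <;> simp [emb, mk3] }

lemma inner_emb_add_smul_e₃ (v w : E2) (p q : ℝ) :
    ⟪emb v + p • e₃, emb w + q • e₃⟫ = ⟪v, w⟫ + p * q := by
  simp [PiLp.inner_apply, Fin.sum_univ_two, Fin.sum_univ_three, emb, e₃, mk3, mul_comm]

lemma norm_sq_emb_add_smul_e₃ (v : E2) (p : ℝ) : ‖emb v + p • e₃‖ ^ 2 = ‖v‖ ^ 2 + p ^ 2 := by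
  rw [← real_inner_self_eq_norm_sq, inner_emb_add_smul_e₃, real_inner_self_eq_norm_sq, sq p]

lemma norm_Jc (v : E2) : ‖Jc v‖ = ‖v‖ := by
  simp [EuclideanSpace.norm_eq, Fin.sum_univ_two, Jc, mk2, add_comm]

lemma cross3_eq_toLp_crossProduct (u v : E3) :
    cross3 u v = WithLp.toLp 2 (crossProduct u.ofLp v.ofLp) :=
  rfl

lemma smul_cross3_smul (r s : ℝ) (u v : E3) :
    cross3 (r • u) (s • v) = (r * s) • cross3 u v := by
  simp [cross3_eq_toLp_crossProduct, smul_smul, mul_comm]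

lemma cross3_cross3 (u v w : E3) : cross3 (cross3 u v) w = ⟪u, w⟫ • v - ⟪v, w⟫ • u := by
  simp [cross3_eq_toLp_crossProduct, cross_cross_eq_smul_sub_smul,
    EuclideanSpace.inner_eq_star_dotProduct, dotProduct_comm]

lemma unit_binormal_cross3_unit_tangent (u v : E3) :
    cross3 (‖cross3 u v‖⁻¹ • cross3 u v) (‖u‖⁻¹ • u) =
      (‖u‖ * ‖cross3 u v‖)⁻¹ • (‖u‖ ^ 2 • v - ⟪u, v⟫ • u) := by
  rw [smul_cross3_smul, cross3_cross3, real_inner_self_eq_norm_sq, real_inner_comm, mul_inv_rev]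

lemma cross3_emb_add_smul_e₃ (a b : E2) (p q : ℝ) :
    cross3 (emb a + p • e₃) (emb b + q • e₃) = emb (Jc (p • b - q • a)) + ⟪b, Jc a⟫ • e₃ := by
  have inner_eq : ⟪b, Jc a⟫ = a 0 * b 1 - a 1 * b 0 := by
    simp [PiLp.inner_apply, Fin.sum_univ_two, Jc, mk2, sub_eq_neg_add]
  rw [inner_eq]
  simp only [← mk3_eq_emb_add_smul_e₃, cross3]
  congr 1 <;> simp [mk3, Jc, mk2, mul_comm]

lemma norm_sq_cross3_emb_add_smul_e₃ (a b : E2) (p q : ℝ) :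
    ‖cross3 (emb a + p • e₃) (emb b + q • e₃)‖ ^ 2 = ⟪b, Jc a⟫ ^ 2 + ‖q • a - p • b‖ ^ 2 := by
  rw [cross3_emb_add_smul_e₃, norm_sq_emb_add_smul_e₃, norm_Jc, norm_sub_rev, add_comm]

section Derivatives

/-- A function is twice differentiable at `t` if it is differentiable near `t` and its derivative is
differentiable at `t`; this is all the regularity that `γ''(t)` requires. The first clause excludes
points near `t` at which `deriv g` only has its default value `0`. -/
def TwiceDifferentiableAt {E : Type*} [NormedAddCommGroup E] [NormedSpace ℝ E]
    (g : ℝ → E) (t : ℝ) : Prop :=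
  (∀ᶠ u in 𝓝 t, DifferentiableAt ℝ g u) ∧ DifferentiableAt ℝ (deriv g) t

variable {f : ℝ → ℝ} {t : ℝ}

lemma TwiceDifferentiableAt.of_contDiffAt {E : Type*} [NormedAddCommGroup E] [NormedSpace ℝ E]
    {g : ℝ → E} {n : WithTop ℕ∞} (hg : ContDiffAt ℝ n g t) (hn : 2 ≤ n) :
    TwiceDifferentiableAt g t := by
  have hg2 : ContDiffAt ℝ 2 g t := hg.of_le hn
  refine ⟨(hg2.eventually (by simp)).mono fun u hu => hu.differentiableAt (by simp), ?_⟩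
  exact (hg2.derivWithin (m := 1) (by norm_num)).differentiableAt (by simp)

variable {F : Type*} [NormedAddCommGroup F] [InnerProductSpace ℝ F] {g : ℝ → F}

lemma deriv_norm_sq_add_sq (hg : DifferentiableAt ℝ g t) (hf : DifferentiableAt ℝ f t) :
    deriv (fun u => ‖g u‖ ^ 2 + f u ^ 2) t = 2 * (⟪g t, deriv g t⟫ + f t * deriv f t) := by
  refine (hg.hasDerivAt.norm_sq.add (hf.hasDerivAt.pow 2)).deriv.trans ?_
  simp [mul_add, mul_assoc]

lemma deriv_norm_sq_div_two (hg : DifferentiableAt ℝ g t) :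
    deriv (fun u => ‖g u‖ ^ 2 / 2) t = ⟪g t, deriv g t⟫ := by
  simp [(hg.hasDerivAt.norm_sq.div_const 2).deriv]

variable {α : ℝ → E2}

lemma deriv_emb_add_smul_e₃ (hα : DifferentiableAt ℝ α t) (hf : DifferentiableAt ℝ f t) :
    deriv (fun u => emb (α u) + f u • e₃) t = emb (deriv α t) + deriv f t • e₃ :=
  ((embCLM.hasFDerivAt.comp_hasDerivAt t hα.hasDerivAt).add
    (hf.hasDerivAt.smul_const e₃)).deriv

lemma deriv_deriv_emb_add_smul_e₃ (hα : TwiceDifferentiableAt α t)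
    (hf : TwiceDifferentiableAt f t) :
    deriv (deriv fun u => emb (α u) + f u • e₃) t =
      emb (deriv (deriv α) t) + deriv (deriv f) t • e₃ := by
  have deriv_near : deriv (fun u => emb (α u) + f u • e₃) =ᶠ[𝓝 t]
      fun u => emb (deriv α u) + deriv f u • e₃ := by
    filter_upwards [hα.1, hf.1] with u hαu hfu using deriv_emb_add_smul_e₃ hαu hfu
  rw [deriv_near.deriv_eq, deriv_emb_add_smul_e₃ hα.2 hf.2]

end Derivatives

theorem cylindrical_curve_principal_normal_general
    {α : ℝ → E2} {f : ℝ → ℝ} {γ : ℝ → E3} {κ t : ℝ}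
    (hα : TwiceDifferentiableAt α t) (hreg : deriv α t ≠ 0)
    (hκ : κ = ⟪deriv (deriv α) t, Jc (deriv α t)⟫ / ‖deriv α t‖ ^ 3)
    (hf : TwiceDifferentiableAt f t)
    (hγ : γ =ᶠ[𝓝 t] fun u => mk3 (α u 0) (α u 1) (f u))
    (hne : κ ≠ 0 ∨ deriv (deriv f) t • deriv α t ≠ deriv f t • deriv (deriv α) t) :
    cross3 (deriv γ t) (deriv (deriv γ) t) ≠ 0 ∧
      cross3
          (‖cross3 (deriv γ t) (deriv (deriv γ) t)‖⁻¹ •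
            cross3 (deriv γ t) (deriv (deriv γ) t))
          (‖deriv γ t‖⁻¹ • deriv γ t) =
        (Real.sqrt (‖deriv α t‖ ^ 2 + deriv f t ^ 2) *
            Real.sqrt (‖deriv α t‖ ^ 6 * κ ^ 2 +
              ‖deriv (deriv f) t • deriv α t - deriv f t • deriv (deriv α) t‖ ^ 2))⁻¹ •
          ((‖deriv α t‖ ^ 2 + deriv f t ^ 2) • emb (deriv (deriv α) t) -
            (1 / 2 * deriv (fun u => ‖deriv α u‖ ^ 2 + deriv f u ^ 2) t) • emb (deriv α t) +
            (deriv (deriv f) t * ‖deriv α t‖ ^ 2 -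
              deriv f t * deriv (fun u => ‖deriv α u‖ ^ 2 / 2) t) • e₃) := by
  simp only [mk3_eq_emb_add_smul_e₃] at hγ
  have velocity : deriv γ t = emb (deriv α t) + deriv f t • e₃ :=
    hγ.deriv_eq.trans (deriv_emb_add_smul_e₃ hα.1.self_of_nhds hf.1.self_of_nhds)
  have acceleration : deriv (deriv γ) t = emb (deriv (deriv α) t) + deriv (deriv f) t • e₃ :=
    hγ.deriv.deriv_eq.trans (deriv_deriv_emb_add_smul_e₃ hα hf)
  have speed : Real.sqrt (‖deriv α t‖ ^ 2 + deriv f t ^ 2) = ‖deriv γ t‖ := by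
    rw [velocity, ← norm_sq_emb_add_smul_e₃, Real.sqrt_sq (norm_nonneg _)]
  have curvature_sq : ‖deriv α t‖ ^ 6 * κ ^ 2 = ⟪deriv (deriv α) t, Jc (deriv α t)⟫ ^ 2 := by
    have norm_ne_zero : ‖deriv α t‖ ≠ 0 := norm_ne_zero_iff.2 hreg
    rw [hκ]
    field_simp
  have norm_sq_cross : ‖cross3 (deriv γ t) (deriv (deriv γ) t)‖ ^ 2 = ‖deriv α t‖ ^ 6 * κ ^ 2 +
      ‖deriv (deriv f) t • deriv α t - deriv f t • deriv (deriv α) t‖ ^ 2 := by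
    rw [velocity, acceleration, norm_sq_cross3_emb_add_smul_e₃, curvature_sq]
  constructor
  · rw [← norm_ne_zero_iff, ← sq_pos_iff, norm_sq_cross]
    rcases hne with hκ0 | hplane
    · positivity
    · have norm_diff_pos := norm_pos_iff.2 (sub_ne_zero.2 hplane)
      positivity
  · rw [unit_binormal_cross3_unit_tangent, speed, ← norm_sq_cross, Real.sqrt_sq (norm_nonneg _),
      deriv_norm_sq_add_sq hα.2 hf.2, deriv_norm_sq_div_two hα.2]
    congr 1
    rw [velocity, acceleration, norm_sq_emb_add_smul_e₃, inner_emb_add_smul_e₃]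
    module

/-- For a regular `C³` plane curve `α` with nonvanishing signed curvature `K`
and a `C²` function `f`, the principal unit normal `N = B × T` of the cylindrical curve
`γ(t) = (α₁(t), α₂(t), f(t))` satisfies
`N = [(ṡ² + f'²)·ι(α'') − ½(d/dt)(ṡ² + f'²)·ι(α') + (f''ṡ² − f'·(d/dt)(ṡ²/2))·e₃] /
     [√(ṡ² + f'²)·√(ṡ⁶K² + ‖f''α' − f'α''‖²)]` where `ṡ = ‖α'‖`. -/
theorem cylindrical_curve_principal_normal
    (I : Set ℝ) (hIopen : IsOpen I) (hIconn : I.OrdConnected)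
    (α : ℝ → E2) (f : ℝ → ℝ) (γ : ℝ → E3) (K : ℝ → ℝ)
    (hα : ContDiffOn ℝ 3 α I) (hreg : ∀ t ∈ I, deriv α t ≠ 0)
    (hK : ∀ t ∈ I, K t = ⟪deriv (deriv α) t, Jc (deriv α t)⟫ / ‖deriv α t‖ ^ 3)
    (hK0 : ∀ t ∈ I, K t ≠ 0)
    (hf : ContDiffOn ℝ 2 f I)
    (hγ : ∀ t, γ t = mk3 (α t 0) (α t 1) (f t)) :
    ∀ t ∈ I,
      cross3
          (‖cross3 (deriv γ t) (deriv (deriv γ) t)‖⁻¹ •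
            cross3 (deriv γ t) (deriv (deriv γ) t))
          (‖deriv γ t‖⁻¹ • deriv γ t) =
        (Real.sqrt (‖deriv α t‖ ^ 2 + deriv f t ^ 2) *
            Real.sqrt (‖deriv α t‖ ^ 6 * K t ^ 2 +
              ‖deriv (deriv f) t • deriv α t - deriv f t • deriv (deriv α) t‖ ^ 2))⁻¹ •
          ((‖deriv α t‖ ^ 2 + deriv f t ^ 2) • emb (deriv (deriv α) t) -
            (1 / 2 * deriv (fun u => ‖deriv α u‖ ^ 2 + deriv f u ^ 2) t) • emb (deriv α t) +
            (deriv (deriv f) t * ‖deriv α t‖ ^ 2 -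
              deriv f t * deriv (fun u => ‖deriv α u‖ ^ 2 / 2) t) • e₃) := by
  intro t ht
  have hI : I ∈ 𝓝 t := hIopen.mem_nhds ht
  exact (cylindrical_curve_principal_normal_general
    (.of_contDiffAt (hα.contDiffAt hI) (by norm_num)) (hreg t ht) (hK t ht)
    (.of_contDiffAt (hf.contDiffAt hI) le_rfl) (.of_forall hγ) (.inl (hK0 t ht))).2
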